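/- Let M > 0 and 0 < α < 4π. Then there exists a constant K = K(α, M) > 0 such that for every continuously differentiable function u : ℝ² → ℝ with compact support satisfying ∫_{ℝ²} |∇u(x)|² dx ≤ 1 and ∫_{ℝ²} u(x)² dx ≤ M, one has ∫_{ℝ²} (e^{α u(x)²} − 1) dx ≤ K. -/

import Mathlib

open MeasureTheory

abbrev E2 := EuclideanSpace ℝ (Fin 2)

noncomputable def ee (θ : ℝ) : E2 := !₂[Real.cos θ, Real.sin θ]

lemma ee_norm (θ : ℝ) : ‖ee θ‖ = 1 := by
  simp [ee, EuclideanSpace.norm_eq]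

lemma ee_cont : Continuous ee := by
  unfold ee
  refine (PiLp.continuous_toLp 2 _).comp ?_
  refine continuous_pi fun i => ?_
  fin_cases i
  · simpa using Real.continuous_cos
  · simpa using Real.continuous_sin

noncomputable def pm (a b : ℝ) : Measure (ℝ × ℝ) :=
  (volume.restrict (Set.Ioc a b)).prod (volume.restrict (Set.Ioo (-Real.pi) Real.pi))

instance (a b : ℝ) : SFinite (pm a b) := by unfold pm; infer_instance

noncomputable def JJ (F : E2 → ENNReal) (a b : ℝ) (x : E2) : ENNReal :=
  ∫⁻ p, F (x + p.1 • ee p.2) ∂(pm a b)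

lemma meas_shift : Measurable (fun q : E2 × (ℝ × ℝ) => q.1 + q.2.1 • ee q.2.2) := by
  have := ee_cont
  exact Continuous.measurable (by fun_prop)

lemma meas_shift' (x : E2) : Measurable (fun q : ℝ × ℝ => x + q.1 • ee q.2) := by
  have := ee_cont
  exact Continuous.measurable (by fun_prop)

lemma cs_lintegral {X : Type*} [MeasurableSpace X] (μ : Measure X) {f g : X → ENNReal}
    (hf : Measurable f) (hg : Measurable g) :
    (∫⁻ x, f x * g x ∂μ) ^ 2 ≤ (∫⁻ x, f x ^ 2 ∂μ) * ∫⁻ x, g x ^ 2 ∂μ := by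
  have h := ENNReal.lintegral_mul_le_Lp_mul_Lq μ (p := 2) (q := 2)
    (by constructor <;> norm_num) hf.aemeasurable hg.aemeasurable
  simp only [Pi.mul_apply] at h
  have key : ∀ A : ENNReal, (A ^ (1 / (2 : ℝ))) ^ 2 = A := by
    intro A
    rw [← ENNReal.rpow_natCast, ← ENNReal.rpow_mul]; norm_num
  refine (pow_le_pow_left' h 2).trans (le_of_eq ?_)
  rw [mul_pow, key, key]
  norm_cast

lemma polar_le (F : E2 → ENNReal) (a b : ℝ) (ha : 0 ≤ a) (x : E2) :
    ∫⁻ p, ENNReal.ofReal p.1 * F (x + p.1 • ee p.2) ∂(pm a b) ≤ ∫⁻ y, F y := by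
  have h1 : ∫⁻ y, F y = ∫⁻ q : ℝ × ℝ, F (x + !₂[q.1, q.2]) := by
    rw [← lintegral_add_left_eq_self F x]
    have mp : MeasurePreserving (fun q : ℝ × ℝ => (!₂[q.1, q.2] : E2)) volume volume := by
      have h := (PiLp.volume_preserving_toLp (Fin 2)).comp
        ((volume_preserving_finTwoArrow ℝ).symm)
      exact h
    have me : MeasurableEmbedding (fun q : ℝ × ℝ => (!₂[q.1, q.2] : E2)) := by
      have h := (MeasurableEquiv.toLp 2 (Fin 2 → ℝ)).measurableEmbedding.comp
        (MeasurableEquiv.finTwoArrow (α := ℝ)).symm.measurableEmbedding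
      exact h
    exact (mp.lintegral_comp_emb me (fun y => F (x + y))).symm
  rw [h1, ← lintegral_comp_polarCoord_symm]
  unfold pm
  rw [Measure.prod_restrict, ← Measure.volume_eq_prod]
  refine le_trans (lintegral_mono_set (t := polarCoord.target) ?_) (le_of_eq ?_)
  · rintro ⟨r, θ⟩ ⟨h, h'⟩
    exact ⟨lt_of_le_of_lt ha h.1, h'⟩
  · congr 1
    ext p
    simp only [smul_eq_mul]
    congr 3
    ext i
    fin_cases i <;> simp [ee, polarCoord]

lemma pm_inv (a b : ℝ) (ha : 0 < a) (hab : a ≤ b) :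
    ∫⁻ p, ENNReal.ofReal (p.1⁻¹) ∂(pm a b) = ENNReal.ofReal (2 * Real.pi * Real.log (b / a)) := by
  unfold pm
  have h := lintegral_prod_mul (μ := volume.restrict (Set.Ioc a b))
    (ν := volume.restrict (Set.Ioo (-Real.pi) Real.pi)) (f := fun r : ℝ => ENNReal.ofReal (r⁻¹))
    (g := fun _ => 1) (by fun_prop) (by fun_prop)
  simp only [mul_one] at h
  rw [h, ← integral_inv_of_pos ha (ha.trans_le hab), intervalIntegral.integral_of_le hab,
    mul_comm (2 * Real.pi), ENNReal.ofReal_mul, ofReal_integral_eq_lintegral_ofReal]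
  · congr 1
    simp [two_mul]
  · have : IntervalIntegrable (fun x : ℝ => x⁻¹) volume a b := by
      apply intervalIntegral.intervalIntegrable_inv
      · intro x hx
        rw [Set.uIcc_of_le hab] at hx
        linarith [hx.1, ha]
      · exact continuousOn_id
    exact (intervalIntegrable_iff_integrableOn_Ioc_of_le hab).1 this
  · filter_upwards [self_mem_ae_restrict measurableSet_Ioc] with x hx
    exact inv_nonneg.2 (ha.trans hx.1).le
  · apply setIntegral_nonneg measurableSet_Ioc
    intro x hx
    exact inv_nonneg.2 (ha.trans hx.1).le

lemma pm_ae_pos (a b : ℝ) (ha : 0 ≤ a) : ∀ᵐ p ∂(pm a b), 0 < p.1 := by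
  unfold pm
  rw [Measure.prod_restrict]
  filter_upwards [self_mem_ae_restrict (measurableSet_Ioc.prod measurableSet_Ioo)] with p hp
  exact lt_of_le_of_lt ha hp.1.1

lemma pm_univ (a b : ℝ) : ∫⁻ _, 1 ∂(pm a b) = ENNReal.ofReal (b - a) * ENNReal.ofReal (2 * Real.pi) := by
  unfold pm
  rw [lintegral_one, ← Set.univ_prod_univ, Measure.prod_prod]
  simp [two_mul]

lemma JJ_sq_le (F : E2 → ENNReal) (hF : Measurable F) (a b : ℝ) (ha : 0 < a) (hab : a ≤ b) (x : E2) :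
    (JJ F a b x) ^ 2 ≤ ENNReal.ofReal (2 * Real.pi * Real.log (b / a)) * ∫⁻ y, F y ^ 2 := by
  have hms := meas_shift' x
  have e1 : JJ F a b x = ∫⁻ p, ENNReal.ofReal ((Real.sqrt p.1)⁻¹) *
      (ENNReal.ofReal (Real.sqrt p.1) * F (x + p.1 • ee p.2)) ∂(pm a b) := by
    unfold JJ
    apply lintegral_congr_ae
    filter_upwards [pm_ae_pos a b ha.le] with p hp
    rw [← mul_assoc, ← ENNReal.ofReal_mul (by positivity), inv_mul_cancel₀ (by positivity)]
    simp
  rw [e1]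
  refine (cs_lintegral _ (by fun_prop) ?_).trans ?_
  · exact Measurable.mul (by fun_prop) (hF.comp hms)
  rw [← pm_inv a b ha hab]
  gcongr ?_ * ?_
  · apply lintegral_mono_ae
    filter_upwards [pm_ae_pos a b ha.le] with p hp
    rw [← ENNReal.ofReal_pow (by positivity), inv_pow, Real.sq_sqrt hp.le]
  · refine le_trans (lintegral_mono_ae ?_) (polar_le (fun y => F y ^ 2) a b ha.le x)
    filter_upwards [pm_ae_pos a b ha.le] with p hp
    rw [mul_pow, ← ENNReal.ofReal_pow (by positivity), Real.sq_sqrt hp.le]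

lemma JJ_meas (F : E2 → ENNReal) (hF : Measurable F) (a b : ℝ) : Measurable (JJ F a b) := by
  unfold JJ
  exact Measurable.lintegral_prod_right' (f := fun q : E2 × (ℝ × ℝ) => F (q.1 + q.2.1 • ee q.2.2))
    (hF.comp meas_shift)

lemma JJ0_le (F : E2 → ENNReal) (hF : Measurable F) (s : ℝ) (hs : 0 < s) :
    ∫⁻ x, (JJ F 0 s x) ^ 2 ≤ ENNReal.ofReal ((s * (2 * Real.pi)) ^ 2) * ∫⁻ y, F y ^ 2 := by
  have h1 : ∀ x, (JJ F 0 s x) ^ 2 ≤ ENNReal.ofReal (s * (2 * Real.pi)) *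
      ∫⁻ p, F (x + p.1 • ee p.2) ^ 2 ∂(pm 0 s) := by
    intro x
    have := cs_lintegral (pm 0 s) (f := fun _ => 1) (g := fun p => F (x + p.1 • ee p.2))
      (by fun_prop) (hF.comp (meas_shift' x))
    simp only [one_mul, one_pow] at this
    rwa [pm_univ, sub_zero, ← ENNReal.ofReal_mul hs.le] at this
  have hm : Measurable (fun q : E2 × (ℝ × ℝ) => F (q.1 + q.2.1 • ee q.2.2) ^ 2) :=
    (hF.comp meas_shift).pow_const 2
  calc _ ≤ ∫⁻ x, ENNReal.ofReal (s * (2 * Real.pi)) *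
      ∫⁻ p, F (x + p.1 • ee p.2) ^ 2 ∂(pm 0 s) := lintegral_mono h1
    _ = ENNReal.ofReal (s * (2 * Real.pi)) *
      ∫⁻ x, ∫⁻ p, F (x + p.1 • ee p.2) ^ 2 ∂(pm 0 s) := by
        rw [lintegral_const_mul]
        exact Measurable.lintegral_prod_right' hm
    _ = ENNReal.ofReal (s * (2 * Real.pi)) *
      ∫⁻ p, ∫⁻ x, F (x + p.1 • ee p.2) ^ 2 ∂volume ∂(pm 0 s) := by
        rw [lintegral_lintegral_swap]
        exact hm.aemeasurable
    _ = ENNReal.ofReal (s * (2 * Real.pi)) * ∫⁻ p, (∫⁻ x, F x ^ 2) * 1 ∂(pm 0 s) := by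
        congr 2
        ext p
        rw [lintegral_add_right_eq_self (fun x => F x ^ 2), mul_one]
    _ = _ := by
        rw [lintegral_const_mul _ (by fun_prop), pm_univ, sub_zero, ← ENNReal.ofReal_mul hs.le,
          pow_two, ENNReal.ofReal_mul (p := s * (2 * Real.pi)) (by positivity)]
        rw [mul_comm (∫⁻ x, F x ^ 2), mul_assoc]

lemma JJ_split (F : E2 → ENNReal) (s b : ℝ) (x : E2) :
    JJ F 0 b x ≤ JJ F 0 s x + JJ F s b x := by
  unfold JJ pm
  simp only [Measure.prod_restrict]
  refine le_trans (lintegral_mono_set ?_) (lintegral_union_le _ _ _)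
  rintro ⟨r, θ⟩ ⟨h, h'⟩
  rcases le_or_gt r s with h1 | h1
  · left; exact ⟨⟨h.1, h1⟩, h'⟩
  · right; exact ⟨⟨h1, h.2⟩, h'⟩

lemma ray_le (u : E2 → ℝ) (hu : ContDiff ℝ 1 u) (x : E2) (θ ρ : ℝ) (h0 : 0 ≤ ρ) (h2 : ρ ≤ 2) :
    ‖u x‖ₑ ≤ ‖u (x + ρ • ee θ)‖ₑ + ∫⁻ r in Set.Ioc (0 : ℝ) 2, ‖fderiv ℝ u (x + r • ee θ)‖ₑ := by
  have hc : ContDiff ℝ 1 (fun r : ℝ => u (x + r • ee θ)) := by fun_prop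
  have h := enorm_sub_le_lintegral_deriv_of_contDiffOn_Icc (a := 0) (b := ρ) hc.contDiffOn h0
  simp only [zero_smul, add_zero] at h
  have hd : ∀ r : ℝ, ‖deriv (fun r : ℝ => u (x + r • ee θ)) r‖ₑ ≤ ‖fderiv ℝ u (x + r • ee θ)‖ₑ := by
    intro r
    have h1 : HasDerivAt (fun r : ℝ => x + r • ee θ) (ee θ) r := by
      simpa using ((hasDerivAt_id r).smul_const (ee θ)).const_add x
    have h2 := ((hu.differentiable (by norm_num)) (x + r • ee θ)).hasFDerivAt.comp_hasDerivAt r h1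
    have h3 : deriv (fun r : ℝ => u (x + r • ee θ)) r = fderiv ℝ u (x + r • ee θ) (ee θ) := h2.deriv
    rw [h3, enorm_le_iff_norm_le]
    simpa [ee_norm] using (fderiv ℝ u (x + r • ee θ)).le_opNorm (ee θ)
  have h3 : ‖u (x + ρ • ee θ) - u x‖ₑ ≤ ∫⁻ r in Set.Ioc (0 : ℝ) 2, ‖fderiv ℝ u (x + r • ee θ)‖ₑ := by
    refine h.trans ((lintegral_mono hd).trans ?_)
    rw [← restrict_Ioc_eq_restrict_Icc]
    exact lintegral_mono_set (Set.Ioc_subset_Ioc_right h2)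
  calc ‖u x‖ₑ = ‖u (x + ρ • ee θ) - (u (x + ρ • ee θ) - u x)‖ₑ := by congr 1; ring
    _ ≤ ‖u (x + ρ • ee θ)‖ₑ + ‖u (x + ρ • ee θ) - u x‖ₑ := enorm_sub_le
    _ ≤ _ := by gcongr

lemma pt_le (u : E2 → ℝ) (hu : ContDiff ℝ 1 u) (x : E2) :
    ENNReal.ofReal (2 * Real.pi) * ‖u x‖ₑ ≤
      JJ (fun y => ‖u y‖ₑ) 1 2 x + JJ (fun y => ‖fderiv ℝ u y‖ₑ) 0 2 x := by
  have hum : Measurable (fun y => ‖u y‖ₑ) := hu.continuous.measurable.enorm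
  have hgm : Measurable (fun y => ‖fderiv ℝ u y‖ₑ) :=
    (hu.continuous_fderiv (by norm_num)).measurable.enorm
  have hg2 : Measurable (fun p : ℝ × ℝ => ‖fderiv ℝ u (x + p.1 • ee p.2)‖ₑ) :=
    hgm.comp (meas_shift' x)
  have hu2 : Measurable (fun p : ℝ × ℝ => ‖u (x + p.1 • ee p.2)‖ₑ) := hum.comp (meas_shift' x)
  have e1 : ENNReal.ofReal (2 * Real.pi) * ‖u x‖ₑ = ∫⁻ p, ‖u x‖ₑ ∂(pm 1 2) := by
    have := lintegral_const_mul (μ := pm 1 2) ‖u x‖ₑ (f := fun _ => 1) (by fun_prop)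
    simp only [mul_one] at this
    rw [this, pm_univ, mul_comm]
    norm_num
  have hG : Measurable (fun θ : ℝ => ∫⁻ r in Set.Ioc (0 : ℝ) 2, ‖fderiv ℝ u (x + r • ee θ)‖ₑ) :=
    Measurable.lintegral_prod_left' hg2
  have e2 : JJ (fun y => ‖fderiv ℝ u y‖ₑ) 0 2 x =
      ∫⁻ p, (∫⁻ r in Set.Ioc (0 : ℝ) 2, ‖fderiv ℝ u (x + r • ee p.2)‖ₑ) ∂(pm 1 2) := by
    unfold JJ pm
    rw [lintegral_prod_symm _ hg2.aemeasurable]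
    have := lintegral_prod_mul (μ := volume.restrict (Set.Ioc (1 : ℝ) 2))
      (ν := volume.restrict (Set.Ioo (-Real.pi) Real.pi)) (f := fun r : ℝ => 1)
      (g := fun θ : ℝ => ∫⁻ r in Set.Ioc (0 : ℝ) 2, ‖fderiv ℝ u (x + r • ee θ)‖ₑ)
      (by fun_prop) hG.aemeasurable
    simp only [one_mul] at this
    rw [this]
    have h1 : (2 : ℝ) - 1 = 1 := by norm_num
    simp [h1]
  rw [e1, e2]
  unfold JJ
  rw [← lintegral_add_left hu2]
  apply lintegral_mono_ae
  unfold pm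
  rw [Measure.prod_restrict]
  filter_upwards [self_mem_ae_restrict (measurableSet_Ioc.prod measurableSet_Ioo)] with p hp
  exact ray_le u hu x p.2 p.1 (by linarith [hp.1.1]) hp.1.2

/-- the tail estimate -/
lemma tail (u : E2 → ℝ) (hu : ContDiff ℝ 1 u) (M : ℝ) (hM : 0 < M)
    (h1 : ∫⁻ x, ‖fderiv ℝ u x‖ₑ ^ 2 ≤ 1) (h2 : ∫⁻ x, ‖u x‖ₑ ^ 2 ≤ ENNReal.ofReal M)
    (t : ℝ) (ht : 1 + √M ≤ t) :
    volume {x | t < |u x|} ≤ ENNReal.ofReal (4 * Real.exp (-(4 * Real.pi * (t - (1 + √M)) ^ 2))) := by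
  have hum : Measurable (fun y => ‖u y‖ₑ) := hu.continuous.measurable.enorm
  have hgm : Measurable (fun y => ‖fderiv ℝ u y‖ₑ) :=
    (hu.continuous_fderiv (by norm_num)).measurable.enorm
  have hpi := Real.pi_pos
  have hpi3 := Real.pi_gt_three
  set d := t - (1 + √M) with hd
  have hd0 : 0 ≤ d := by linarith
  set s := 2 * Real.exp (-(2 * Real.pi * d ^ 2)) with hs
  have hs0 : 0 < s := by positivity
  have hs2 : s ≤ 2 := by
    have : Real.exp (-(2 * Real.pi * d ^ 2)) ≤ 1 := by
      rw [Real.exp_le_one_iff]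
      have : 0 ≤ 2 * Real.pi * d ^ 2 := by positivity
      linarith
    linarith
  have hlog : Real.log (2 / s) = 2 * Real.pi * d ^ 2 := by
    have : 2 / s = Real.exp (2 * Real.pi * d ^ 2) := by
      rw [hs, Real.exp_neg]; field_simp
    rw [this, Real.log_exp]
  have hsq : ∀ (A : ENNReal) (c : ℝ), 0 ≤ c → A ^ 2 ≤ ENNReal.ofReal (c ^ 2) → A ≤ ENNReal.ofReal c := by
    intro A c hc h
    rw [ENNReal.ofReal_pow hc] at h
    exact (ENNReal.pow_le_pow_left_iff two_ne_zero).1 h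
  have hA : ∀ x, JJ (fun y => ‖fderiv ℝ u y‖ₑ) s 2 x ≤ ENNReal.ofReal (2 * Real.pi * d) := by
    intro x
    apply hsq _ _ (by positivity)
    refine (JJ_sq_le _ hgm s 2 hs0 hs2 x).trans ?_
    rw [hlog]
    calc _ ≤ ENNReal.ofReal (2 * Real.pi * (2 * Real.pi * d ^ 2)) * 1 := by gcongr
      _ = _ := by rw [mul_one]; congr 1; ring
  have hB : ∀ x, JJ (fun y => ‖u y‖ₑ) 1 2 x ≤ ENNReal.ofReal (2 * Real.pi * √M) := by
    intro x
    apply hsq _ _ (by positivity)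
    refine (JJ_sq_le _ hum 1 2 one_pos one_le_two x).trans ?_
    calc _ ≤ ENNReal.ofReal (2 * Real.pi * Real.log (2 / 1)) * ENNReal.ofReal M := by gcongr
      _ ≤ _ := by
        rw [← ENNReal.ofReal_mul (by have := Real.log_nonneg (x := 2 / 1) (by norm_num); positivity)]
        apply ENNReal.ofReal_le_ofReal
        rw [mul_pow, Real.sq_sqrt hM.le, div_one]
        gcongr
        rw [pow_two]
        gcongr
        linarith [Real.log_two_lt_d9]
  have hC : {x | t < |u x|} ⊆ {x | ENNReal.ofReal ((2 * Real.pi) ^ 2) ≤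
      (JJ (fun y => ‖fderiv ℝ u y‖ₑ) 0 s x) ^ 2} := by
    intro x hx
    simp only [Set.mem_ofPred_eq] at hx ⊢
    rw [ENNReal.ofReal_pow (by positivity)]
    gcongr
    by_contra hcon
    push Not at hcon
    have h3 := (pt_le u hu x).trans (add_le_add (hB x) ((JJ_split _ s 2 x).trans
      (add_le_add_right (hA x) _)))
    have h4 : ENNReal.ofReal (2 * Real.pi) * ‖u x‖ₑ < ENNReal.ofReal (2 * Real.pi * √M) +
      (ENNReal.ofReal (2 * Real.pi) + ENNReal.ofReal (2 * Real.pi * d)) := by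
      refine lt_of_le_of_lt h3 ?_
      apply ENNReal.add_lt_add_left ENNReal.ofReal_ne_top
      exact ENNReal.add_lt_add_right ENNReal.ofReal_ne_top hcon
    rw [← ENNReal.ofReal_add (by positivity) (by positivity),
      ← ENNReal.ofReal_add (by positivity) (by positivity), ← ofReal_norm,
      ← ENNReal.ofReal_mul (by positivity), ENNReal.ofReal_lt_ofReal_iff (by positivity),
      Real.norm_eq_abs] at h4
    have h5 : 2 * Real.pi * |u x| < 2 * Real.pi * t := by
      rw [show t = √M + (1 + d) by rw [hd]; ring]
      linarith
    have := lt_of_mul_lt_mul_left h5 (by positivity)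
    linarith
  refine (measure_mono hC).trans ?_
  have hcheb := meas_ge_le_lintegral_div (μ := (volume : Measure E2))
    (f := fun x => (JJ (fun y => ‖fderiv ℝ u y‖ₑ) 0 s x) ^ 2)
    ((JJ_meas _ hgm 0 s).pow_const 2).aemeasurable (ε := ENNReal.ofReal ((2 * Real.pi) ^ 2))
    (by simp [hpi.ne']) ENNReal.ofReal_ne_top
  refine hcheb.trans ?_
  rw [ENNReal.div_le_iff (by simp [hpi.ne']) ENNReal.ofReal_ne_top,
    ← ENNReal.ofReal_mul (by positivity)]
  refine (JJ0_le _ hgm s hs0).trans ?_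
  calc _ ≤ ENNReal.ofReal ((s * (2 * Real.pi)) ^ 2) * 1 := by gcongr
    _ = _ := by
      rw [mul_one]; congr 1
      rw [mul_pow, hs, mul_pow, ← Real.exp_nat_mul]
      norm_num
      ring

lemma summ (α B : ℝ) (hα0 : 0 < α) (hα : α < 4 * Real.pi) (N : ℕ) :
    Summable (fun k : ℕ => Real.exp (α * ((N + k : ℕ) + 1 : ℝ) ^ 2) *
      (4 * Real.exp (-(4 * Real.pi * ((N + k : ℕ) - B : ℝ) ^ 2)))) := by
  obtain ⟨C, hC⟩ : ∃ C : ℝ, ∀ y : ℝ, α * (y + 1) ^ 2 - 4 * Real.pi * (y - B) ^ 2 + y ≤ C := by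
    set δ := 4 * Real.pi - α with hδ
    have hδ0 : 0 < δ := by linarith
    set c := 2 * α + 8 * Real.pi * B + 1 with hc
    refine ⟨c ^ 2 / (4 * δ) + α - 4 * Real.pi * B ^ 2, fun y => ?_⟩
    have h1 : c * y - δ * y ^ 2 ≤ c ^ 2 / (4 * δ) := by
      rw [le_div_iff₀ (by positivity)]
      nlinarith [sq_nonneg (c - 2 * δ * y)]
    rw [hc, hδ] at h1
    rw [hc, hδ]
    linarith
  refine Summable.of_nonneg_of_le (fun k => by positivity) (fun k => ?_)
    (Real.summable_exp_neg_nat.mul_left (4 * Real.exp C))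
  have := hC ((N + k : ℕ) : ℝ)
  calc _ = 4 * Real.exp (α * ((N + k : ℕ) + 1 : ℝ) ^ 2 + -(4 * Real.pi * ((N + k : ℕ) - B : ℝ) ^ 2)) := by
        rw [Real.exp_add]; ring
    _ ≤ 4 * Real.exp (C + -(k : ℝ)) := by
        apply mul_le_mul_of_nonneg_left _ (by norm_num)
        apply Real.exp_le_exp.2
        have h0 : (k : ℝ) ≤ ((N + k : ℕ) : ℝ) := by exact_mod_cast Nat.le_add_left k N
        linarith
    _ = _ := by rw [Real.exp_add]; ring

theorem stmt_16 (M α : ℝ) (hM : 0 < M) (hα0 : 0 < α) (hα : α < 4 * Real.pi) :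
    ∃ K : ℝ, 0 < K ∧
      ∀ u : EuclideanSpace ℝ (Fin 2) → ℝ, ContDiff ℝ 1 u → HasCompactSupport u →
        (∫⁻ x, ENNReal.ofReal (‖gradient u x‖ ^ 2)) ≤ 1 →
        (∫⁻ x, ENNReal.ofReal ((u x) ^ 2)) ≤ ENNReal.ofReal M →
        ∫⁻ x, ENNReal.ofReal (Real.exp (α * (u x) ^ 2) - 1) ≤ ENNReal.ofReal K := by
  obtain ⟨N, hN⟩ := exists_nat_ge (1 + √M)
  have hS := summ α (1 + √M) hα0 hα N
  set a : ℕ → ℝ := fun k : ℕ => Real.exp (α * ((N + k : ℕ) + 1 : ℝ) ^ 2) *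
      (4 * Real.exp (-(4 * Real.pi * ((N + k : ℕ) - (1 + √M) : ℝ) ^ 2))) with ha
  have ha0 : ∀ k, 0 ≤ a k := fun k => by positivity
  set c : ℝ := α * Real.exp (α * (N : ℝ) ^ 2) with hc
  have hc0 : 0 < c := by positivity
  refine ⟨c * M + ∑' k, a k, add_pos_of_pos_of_nonneg (by positivity) (tsum_nonneg ha0), ?_⟩
  intro u hu _ h1 h2
  have hum : Measurable u := hu.continuous.measurable
  have h1' : ∫⁻ x, ‖fderiv ℝ u x‖ₑ ^ 2 ≤ 1 := by
    refine le_trans (le_of_eq ?_) h1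
    congr 1; ext x
    rw [ENNReal.ofReal_pow (norm_nonneg _), ← ofReal_norm, gradient,
      LinearIsometryEquiv.norm_map]
  have h2' : ∫⁻ x, ‖u x‖ₑ ^ 2 ≤ ENNReal.ofReal M := by
    refine le_trans (le_of_eq ?_) h2
    congr 1; ext x
    rw [← ofReal_norm, ← ENNReal.ofReal_pow (norm_nonneg _), Real.norm_eq_abs, sq_abs]
  have hset : ∀ k : ℕ, MeasurableSet {x | ((N + k : ℕ) : ℝ) < |u x|} := fun k =>
    measurableSet_lt measurable_const (by fun_prop)
  have hpt : ∀ x, ENNReal.ofReal (Real.exp (α * (u x) ^ 2) - 1) ≤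
      ENNReal.ofReal c * ENNReal.ofReal ((u x) ^ 2) +
      ∑' k : ℕ, Set.indicator {x | ((N + k : ℕ) : ℝ) < |u x|}
        (fun _ => ENNReal.ofReal (Real.exp (α * ((N + k : ℕ) + 1 : ℝ) ^ 2))) x := by
    intro x
    rcases le_or_gt |u x| N with h | h
    · refine le_trans ?_ le_self_add
      rw [← ENNReal.ofReal_mul hc0.le]
      apply ENNReal.ofReal_le_ofReal
      have h3 : (u x) ^ 2 ≤ (N : ℝ) ^ 2 := by
        rw [← sq_abs]; gcongr
      set y := α * (u x) ^ 2 with hy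
      have hy0 : 0 ≤ y := by positivity
      have h4 : Real.exp y - 1 ≤ y * Real.exp y := by
        have h5 := Real.add_one_le_exp (-y)
        have h6 : Real.exp (-y) * Real.exp y = 1 := by rw [← Real.exp_add]; simp
        nlinarith [Real.exp_pos y]
      calc _ ≤ y * Real.exp y := h4
        _ ≤ y * Real.exp (α * (N : ℝ) ^ 2) := by rw [hy]; gcongr
        _ = _ := by rw [hc, hy]; ring
    · refine le_trans ?_ le_add_self
      set n := ⌈|u x|⌉₊ with hn
      have hn1 : |u x| ≤ n := Nat.le_ceil _
      have hn2 : (n : ℝ) < |u x| + 1 := Nat.ceil_lt_add_one (abs_nonneg _)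
      have hNn : N < n := by exact_mod_cast h.trans_le hn1
      obtain ⟨k, hk⟩ : ∃ k, n = N + k + 1 := ⟨n - N - 1, by omega⟩
      refine le_trans ?_ (ENNReal.le_tsum k)
      rw [hk] at hn1 hn2
      push_cast at hn1 hn2
      rw [Set.indicator_of_mem]
      · apply ENNReal.ofReal_le_ofReal
        have : (u x) ^ 2 ≤ (((N + k : ℕ) : ℝ) + 1) ^ 2 := by
          rw [← sq_abs]; push_cast; gcongr
        have h7 : Real.exp (α * (u x) ^ 2) ≤ Real.exp (α * (((N + k : ℕ) : ℝ) + 1) ^ 2) := by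
          gcongr
        linarith
      · simp only [Set.mem_ofPred_eq]
        push_cast
        linarith
  calc _ ≤ _ := lintegral_mono hpt
    _ = ENNReal.ofReal c * (∫⁻ x, ENNReal.ofReal ((u x) ^ 2)) +
      ∑' k : ℕ, ENNReal.ofReal (Real.exp (α * ((N + k : ℕ) + 1 : ℝ) ^ 2)) *
        volume {x | ((N + k : ℕ) : ℝ) < |u x|} := by
        rw [lintegral_add_left (by fun_prop), lintegral_const_mul _ (by fun_prop), lintegral_tsum]
        · congr 2
          ext k
          rw [lintegral_indicator_const (hset k)]
        · intro k
          exact (measurable_const.indicator (hset k)).aemeasurable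
    _ ≤ ENNReal.ofReal c * ENNReal.ofReal M + ∑' k, ENNReal.ofReal (a k) := by
        gcongr with k
        rw [ha]
        simp only
        rw [ENNReal.ofReal_mul (Real.exp_nonneg _)]
        gcongr
        refine tail u hu M hM h1' h2' _ (hN.trans ?_)
        exact_mod_cast Nat.le_add_right N k
    _ = _ := by
        rw [← ENNReal.ofReal_mul hc0.le, ← ENNReal.ofReal_tsum_of_nonneg ha0 hS,
          ← ENNReal.ofReal_add (by positivity) (tsum_nonneg ha0)]
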